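/- arXiv:1201.6093 — 4 statements merged into one kernel-verified Lean document; each statement's English description precedes it below -/
import Mathlib

section
/- Let N be the lattice U ⊕ ⟨4⟩ ⊕ E8(2) and N' the lattice ⟨2⟩ ⊕ U(2) ⊕ E8, both of rank 11 and signature (2,9). Then there is a bijection between the orbit spaces D(N)/O(N) and D(N')/O(N') of the period domains modulo the full integral orthogonal groups. -/
open Matrix

/-- The hyperbolic plane `U`, with Gram matrix `[[0,1],[1,0]]`. -/
abbrev latU : Matrix (Fin 2) (Fin 2) ℤ := !![0, 1; 1, 0]

/-- The negative definite even unimodular lattice `E₈` (negative of the Cartan matrix). -/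
abbrev latE8 : Matrix (Fin 8) (Fin 8) ℤ :=
  !![-2,  0,  1,  0,  0,  0,  0,  0;
      0, -2,  0,  1,  0,  0,  0,  0;
      1,  0, -2,  1,  0,  0,  0,  0;
      0,  1,  1, -2,  1,  0,  0,  0;
      0,  0,  0,  1, -2,  1,  0,  0;
      0,  0,  0,  0,  1, -2,  1,  0;
      0,  0,  0,  0,  0,  1, -2,  1;
      0,  0,  0,  0,  0,  0,  1, -2]

/-- Orthogonal direct sum of two lattices (block-diagonal Gram matrix). -/
def dsum {a b : ℕ} (A : Matrix (Fin a) (Fin a) ℤ) (B : Matrix (Fin b) (Fin b) ℤ) :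
    Matrix (Fin (a + b)) (Fin (a + b)) ℤ :=
  Matrix.reindex finSumFinEquiv finSumFinEquiv (Matrix.fromBlocks A 0 0 B)

/-- `N = U ⊕ ⟨4⟩ ⊕ E8(2)`. -/
def gramN : Matrix (Fin 11) (Fin 11) ℤ := dsum (dsum latU !![(4 : ℤ)]) (2 • latE8)

/-- `N' = ⟨2⟩ ⊕ U(2) ⊕ E8`. -/
def gramN' : Matrix (Fin 11) (Fin 11) ℤ := dsum (dsum !![(2 : ℤ)] (2 • latU)) latE8

/-- The complex bilinear form attached to an integral Gram matrix `G`. -/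
noncomputable def cform {n : ℕ} (G : Matrix (Fin n) (Fin n) ℤ) (x y : Fin n → ℂ) : ℂ :=
  x ⬝ᵥ (G.map (Int.cast : ℤ → ℂ)).mulVec y

/-- `ω` represents a point of the period domain `D(N)`:
`ω ≠ 0`, `ωᵀGω = 0` and `ωᵀGω̄` is a positive real number. -/
def IsPeriodPt {n : ℕ} (G : Matrix (Fin n) (Fin n) ℤ) (ω : Fin n → ℂ) : Prop :=
  ω ≠ 0 ∧ cform G ω ω = 0 ∧ ∃ r : ℝ, 0 < r ∧ cform G ω (star ω) = (r : ℂ)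

/-- Two period points are related iff they define the same point of the projectivization
up to the action of an integral isometry `P ∈ O(G)`. -/
def periodRel {n : ℕ} (G : Matrix (Fin n) (Fin n) ℤ)
    (ω₁ ω₂ : {ω : Fin n → ℂ // IsPeriodPt G ω}) : Prop :=
  ∃ (c : ℂ) (P : Matrix (Fin n) (Fin n) ℤ), c ≠ 0 ∧ IsUnit P.det ∧ Pᵀ * G * P = G ∧
    (ω₂ : Fin n → ℂ) = c • (P.map (Int.cast : ℤ → ℂ)).mulVec (ω₁ : Fin n → ℂ)

/-- The orbit space `D(N)/O(N)` of the period domain modulo the integral orthogonal group. -/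
def OrbitSpace {n : ℕ} (G : Matrix (Fin n) (Fin n) ℤ) : Type :=
  Quot (periodRel G)

/-! Up to a factor of two on the form, each of the lattices `N` and `N'` is a sublattice of the
other: `T : N → N'`, `(u, a, e) ↦ (2a, u, 2e)` and `S : N' → N`, `(a, u, e) ↦ (2u, a, e)` both
double the form, and `ST = 2`. The image of `T` is the set of `x ∈ N'` with `(x, N') ⊆ 2ℤ` and
`x² ∈ 4ℤ`, and the image of `S` is described in the same way inside `N`. These descriptions refer
only to the form, so every isometry of `N'` preserves the image of `T` and every isometry of `N`
preserves the image of `S`. Hence conjugation by `T` identifies `O(N)` with `O(N')`, and since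
`T` maps `D(N)` onto `D(N')`, it induces the bijection of orbit spaces. About `E8` only
unimodularity and evenness matter. -/

section Similitude

variable {n : ℕ} {G G' P Q T : Matrix (Fin n) (Fin n) ℤ} {k : ℤ}

/-- `P` is an element of the orthogonal group `O(L)` of the lattice `L = (ℤⁿ, G)`. -/
structure IsIsometry (G P : Matrix (Fin n) (Fin n) ℤ) : Prop where
  isUnit_det : IsUnit P.det
  gram_eq : Pᵀ * G * P = G

/-- `T` embeds the lattice `L = (ℤⁿ, G)` into `L' = (ℤⁿ, G')`, multiplying the form by `k`;
in other words, it is an isometry of `L(k)` onto a sublattice of finite index of `L'`. -/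
structure IsSimilitude (k : ℤ) (G G' T : Matrix (Fin n) (Fin n) ℤ) : Prop where
  det_ne_zero : T.det ≠ 0
  gram_eq : Tᵀ * G' * T = k • G

theorem cform_mulVec (x y : Fin n → ℂ) :
    cform G (T.map (Int.cast : ℤ → ℂ) *ᵥ x) (T.map (Int.cast : ℤ → ℂ) *ᵥ y) =
      cform (Tᵀ * G * T) x y := by
  simp only [cform, Matrix.map_mul_intCast, Matrix.transpose_map, ← Matrix.mulVec_mulVec,
    Matrix.dotProduct_mulVec, Matrix.vecMul_transpose]

theorem cform_zsmul (x y : Fin n → ℂ) : cform (k • G) x y = k * cform G x y := by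
  have map_zsmul : (k • G).map (Int.cast : ℤ → ℂ) = (k : ℂ) • G.map (Int.cast : ℤ → ℂ) :=
    Matrix.map_smul' _ _ _ Int.cast_mul
  rw [cform, map_zsmul, Matrix.smul_mulVec, dotProduct_smul, smul_eq_mul, cform]

theorem star_map_intCast_mulVec (x : Fin n → ℂ) :
    star (T.map (Int.cast : ℤ → ℂ) *ᵥ x) = T.map (Int.cast : ℤ → ℂ) *ᵥ star x := by
  ext; simp [Matrix.mulVec, dotProduct]

theorem isUnit_map_intCast (hT : T.det ≠ 0) : IsUnit (T.map (Int.cast : ℤ → ℂ)) := by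
  rw [Matrix.isUnit_iff_isUnit_det, isUnit_iff_ne_zero, ← Int.cast_det]
  exact_mod_cast hT

theorem IsSimilitude.isPeriodPt_mulVec_iff (hT : IsSimilitude k G G' T) (hk : 0 < k)
    (ω : Fin n → ℂ) : IsPeriodPt G' (T.map (Int.cast : ℤ → ℂ) *ᵥ ω) ↔ IsPeriodPt G ω := by
  have hkℝ : (0 : ℝ) < k := mod_cast hk
  have hkℂ : (k : ℂ) ≠ 0 := mod_cast hk.ne'
  have cform_T (x y : Fin n → ℂ) : cform G' (T.map (Int.cast : ℤ → ℂ) *ᵥ x)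
      (T.map (Int.cast : ℤ → ℂ) *ᵥ y) = k * cform G x y := by
    rw [cform_mulVec, hT.gram_eq, cform_zsmul]
  refine and_congr (not_congr ?_) (and_congr ?_ ?_)
  · exact (Matrix.mulVec_injective_of_isUnit (isUnit_map_intCast hT.det_ne_zero)).eq_iff'
      (Matrix.mulVec_zero _)
  · rw [cform_T, mul_eq_zero_iff_left hkℂ]
  · rw [star_map_intCast_mulVec, cform_T]
    constructor
    · rintro ⟨r, hr, h⟩
      refine ⟨r / k, div_pos hr hkℝ, ?_⟩
      push_cast
      rw [eq_div_iff hkℂ, mul_comm, h]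
    · rintro ⟨r, hr, h⟩
      exact ⟨k * r, mul_pos hkℝ hr, by rw [h]; push_cast; rfl⟩

theorem map_intCast_mulVec_eq_smul_iff (hT : T.det ≠ 0) (hPQ : P * T = T * Q) (c : ℂ)
    (x y : Fin n → ℂ) :
    T.map (Int.cast : ℤ → ℂ) *ᵥ y =
        c • P.map (Int.cast : ℤ → ℂ) *ᵥ T.map (Int.cast : ℤ → ℂ) *ᵥ x ↔
      y = c • Q.map (Int.cast : ℤ → ℂ) *ᵥ x := by
  rw [Matrix.mulVec_mulVec, ← Matrix.map_mul_intCast, hPQ, Matrix.map_mul_intCast,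
    ← Matrix.mulVec_mulVec, ← Matrix.mulVec_smul]
  exact (Matrix.mulVec_injective_of_isUnit (isUnit_map_intCast hT)).eq_iff

theorem IsSimilitude.nonempty_orbitSpace_equiv (hT : IsSimilitude k G G' T) (hk : 0 < k)
    (h : ∀ Q, IsIsometry G Q → ∃ P, IsIsometry G' P ∧ P * T = T * Q)
    (h' : ∀ P, IsIsometry G' P → ∃ Q, IsIsometry G Q ∧ P * T = T * Q) :
    Nonempty (OrbitSpace G ≃ OrbitSpace G') := by
  have hT_unit := isUnit_map_intCast hT.det_ne_zero
  let e : (Fin n → ℂ) ≃ (Fin n → ℂ) := .ofBijective (T.map (Int.cast : ℤ → ℂ)).mulVec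
    ⟨Matrix.mulVec_injective_of_isUnit hT_unit, Matrix.mulVec_surjective_iff_isUnit.mpr hT_unit⟩
  refine ⟨Quot.congr (e.subtypeEquiv fun ω ↦ (hT.isPeriodPt_mulVec_iff hk ω).symm) ?_⟩
  rintro ⟨x, hx⟩ ⟨y, hy⟩
  constructor
  · rintro ⟨c, Q, hc, hQ_det, hQ_gram, hxy⟩
    obtain ⟨P, hP, hPQ⟩ := h Q ⟨hQ_det, hQ_gram⟩
    exact ⟨c, P, hc, hP.isUnit_det, hP.gram_eq,
      (map_intCast_mulVec_eq_smul_iff hT.det_ne_zero hPQ c x y).mpr hxy⟩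
  · rintro ⟨c, P, hc, hP_det, hP_gram, hxy⟩
    obtain ⟨Q, hQ, hPQ⟩ := h' P ⟨hP_det, hP_gram⟩
    exact ⟨c, Q, hc, hQ.isUnit_det, hQ.gram_eq,
      (map_intCast_mulVec_eq_smul_iff hT.det_ne_zero hPQ c x y).mp hxy⟩

theorem isSimilitude_one {k : ℕ} (E : Matrix (Fin n) (Fin n) ℤ) :
    IsSimilitude k E (k • E) 1 where
  det_ne_zero := by simp
  gram_eq := by simp

theorem isSimilitude_smul_one {k : ℕ} (hk : k ≠ 0) (E : Matrix (Fin n) (Fin n) ℤ) :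
    IsSimilitude k (k • E) E ((k : ℤ) • 1) where
  det_ne_zero := by
    rw [Matrix.det_smul, Matrix.det_one, mul_one]
    exact pow_ne_zero _ (Nat.cast_ne_zero.mpr hk)
  gram_eq := by
    rw [Matrix.transpose_smul, Matrix.transpose_one, Matrix.smul_mul, one_mul, Matrix.mul_smul,
      mul_one, natCast_zsmul E k]

end Similitude

section QuadraticRadical

variable {n : ℕ} {G G' P Q S T : Matrix (Fin n) (Fin n) ℤ} {k m : ℤ}

/-- The radical modulo `m` of the quadratic form `x ↦ xᵀGx / 2`: the vectors of the lattice
`(ℤⁿ, G)` whose products with all lattice vectors are divisible by `m` and whose norm is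
divisible by `2m`. -/
def quadraticRadical (m : ℤ) (G : Matrix (Fin n) (Fin n) ℤ) : Set (Fin n → ℤ) :=
  {x | (∀ i, m ∣ (G *ᵥ x) i) ∧ 2 * m ∣ x ⬝ᵥ G *ᵥ x}

theorem dvd_mulVec_of_forall_dvd {x : Fin n → ℤ} (hx : ∀ i, m ∣ x i)
    (A : Matrix (Fin n) (Fin n) ℤ) (i : Fin n) : m ∣ (A *ᵥ x) i :=
  show m ∣ ∑ j, A i j * x j from Finset.dvd_sum fun j _ ↦ (hx j).mul_left (A i j)

theorem forall_dvd_mulVec_iff {A : Matrix (Fin n) (Fin n) ℤ} (hA : IsUnit A.det)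
    {x : Fin n → ℤ} : (∀ i, m ∣ (A *ᵥ x) i) ↔ ∀ i, m ∣ x i := by
  refine ⟨fun h ↦ ?_, fun h ↦ dvd_mulVec_of_forall_dvd h A⟩
  have hx : A⁻¹ *ᵥ A *ᵥ x = x := by
    rw [Matrix.mulVec_mulVec, Matrix.nonsing_inv_mul A hA, Matrix.one_mulVec]
  exact hx ▸ dvd_mulVec_of_forall_dvd h A⁻¹

theorem mul_dvd_dotProduct {l : ℤ} {x y : Fin n → ℤ} (hx : ∀ i, m ∣ x i)
    (hy : ∀ i, l ∣ y i) : m * l ∣ x ⬝ᵥ y :=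
  Finset.dvd_sum fun i _ ↦ mul_dvd_mul (hx i) (hy i)

theorem mem_range_zsmul_one_mulVec {x : Fin n → ℤ} :
    x ∈ Set.range (m • (1 : Matrix (Fin n) (Fin n) ℤ)).mulVec ↔ ∀ i, m ∣ x i := by
  simp only [Set.mem_range, Matrix.smul_mulVec, Matrix.one_mulVec, dvd_def, Classical.skolem,
    funext_iff, Pi.smul_apply, smul_eq_mul, eq_comm]

theorem IsIsometry.mapsTo_quadraticRadical (hP : IsIsometry G P) :
    Set.MapsTo P.mulVec (quadraticRadical m G) (quadraticRadical m G) := by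
  rintro x ⟨hGx, hx⟩
  have hPGP : Pᵀ *ᵥ G *ᵥ P *ᵥ x = G *ᵥ x := by
    rw [Matrix.mulVec_mulVec, Matrix.mulVec_mulVec, hP.gram_eq]
  have hPt : IsUnit Pᵀ.det := P.det_transpose ▸ hP.isUnit_det
  constructor
  · rw [← forall_dvd_mulVec_iff hPt, hPGP]
    exact hGx
  · rwa [dotProduct_comm, ← Matrix.dotProduct_transpose_mulVec, hPGP]

theorem exists_mul_eq_mul_of_mapsTo
    (h : Set.MapsTo P.mulVec (Set.range T.mulVec) (Set.range T.mulVec)) :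
    ∃ Q, P * T = T * Q := by
  choose q hq using fun j ↦ h ⟨Pi.single j 1, T.mulVec_single_one j⟩
  refine ⟨(Matrix.of q)ᵀ, ?_⟩
  ext i j
  exact (congrFun (hq j) i).symm

theorem IsSimilitude.isIsometry_of_mul_eq_mul (hT : IsSimilitude k G G' T) (hk : k ≠ 0)
    (hP : IsIsometry G' P) (hPQ : P * T = T * Q) : IsIsometry G Q where
  isUnit_det := by
    have hdet : T.det * P.det = T.det * Q.det := by
      rw [← Matrix.det_mul T Q, ← hPQ, Matrix.det_mul, mul_comm]
    exact mul_left_cancel₀ hT.det_ne_zero hdet ▸ hP.isUnit_det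
  gram_eq := by
    refine smul_right_injective _ hk ?_
    calc k • (Qᵀ * G * Q) = (T * Q)ᵀ * G' * (T * Q) := by
          rw [← Matrix.smul_mul, ← Matrix.mul_smul, ← hT.gram_eq, Matrix.transpose_mul]
          simp only [Matrix.mul_assoc]
      _ = Tᵀ * (Pᵀ * G' * P) * T := by
          rw [← hPQ, Matrix.transpose_mul]
          simp only [Matrix.mul_assoc]
      _ = k • G := by rw [hP.gram_eq, hT.gram_eq]

theorem IsSimilitude.exists_isometry_mul_eq_mul (hT : IsSimilitude k G G' T) (hk : k ≠ 0)
    (hT_range : Set.range T.mulVec = quadraticRadical m G') (hP : IsIsometry G' P) :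
    ∃ Q, IsIsometry G Q ∧ P * T = T * Q := by
  obtain ⟨Q, hPQ⟩ := exists_mul_eq_mul_of_mapsTo (hT_range ▸ hP.mapsTo_quadraticRadical)
  exact ⟨Q, hT.isIsometry_of_mul_eq_mul hk hP hPQ, hPQ⟩

theorem mul_eq_mul_of_mul_eq_smul_one (hS : S.det ≠ 0) (hST : S * T = k • 1)
    (hQP : Q * S = S * P) : P * T = T * Q := by
  have hS_regular : IsLeftRegular S.det := IsLeftCancelMulZero.mul_left_cancel_of_ne_zero hS
  refine (Matrix.isRegular_of_isLeftRegular_det hS_regular).left ?_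
  calc S * (P * T) = Q * (S * T) := by rw [← Matrix.mul_assoc, ← hQP, Matrix.mul_assoc]
    _ = S * T * Q := by rw [hST, Matrix.mul_smul, Matrix.smul_mul, mul_one, one_mul]
    _ = S * (T * Q) := Matrix.mul_assoc S T Q

theorem nonempty_orbitSpace_equiv_of_range_eq_quadraticRadical {m' : ℤ} (hk : 0 < k)
    (hT : IsSimilitude k G G' T) (hS : IsSimilitude k G' G S) (hST : S * T = k • 1)
    (hT_range : Set.range T.mulVec = quadraticRadical m G')
    (hS_range : Set.range S.mulVec = quadraticRadical m' G) :
    Nonempty (OrbitSpace G ≃ OrbitSpace G') := by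
  refine hT.nonempty_orbitSpace_equiv hk (fun Q hQ ↦ ?_)
    fun P ↦ hT.exists_isometry_mul_eq_mul hk.ne' hT_range
  obtain ⟨P, hP, hQP⟩ := hS.exists_isometry_mul_eq_mul hk.ne' hS_range hQ
  exact ⟨P, hP, mul_eq_mul_of_mul_eq_smul_one hS.det_ne_zero hST hQP⟩

end QuadraticRadical

section DirectSum

variable {a b : ℕ}

theorem dsum_transpose (A : Matrix (Fin a) (Fin a) ℤ) (B : Matrix (Fin b) (Fin b) ℤ) :
    (dsum A B)ᵀ = dsum Aᵀ Bᵀ := by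
  simp [dsum, Matrix.fromBlocks_transpose]

theorem dsum_mul_dsum (A C : Matrix (Fin a) (Fin a) ℤ) (B D : Matrix (Fin b) (Fin b) ℤ) :
    dsum A B * dsum C D = dsum (A * C) (B * D) := by
  simp [dsum, Matrix.fromBlocks_multiply]

theorem dsum_zsmul (k : ℤ) (A : Matrix (Fin a) (Fin a) ℤ) (B : Matrix (Fin b) (Fin b) ℤ) :
    dsum (k • A) (k • B) = k • dsum A B := by
  have hblocks := Matrix.fromBlocks_smul k A 0 0 B
  rw [smul_zero, smul_zero] at hblocks
  rw [dsum, ← hblocks]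
  rfl

theorem dsum_one_one : dsum (1 : Matrix (Fin a) (Fin a) ℤ) (1 : Matrix (Fin b) (Fin b) ℤ) = 1 := by
  simp [dsum]

theorem det_dsum (A : Matrix (Fin a) (Fin a) ℤ) (B : Matrix (Fin b) (Fin b) ℤ) :
    (dsum A B).det = A.det * B.det := by
  rw [dsum, Matrix.det_reindex_self, Matrix.det_fromBlocks_zero₂₁]

theorem IsSimilitude.dsum {k : ℤ} {A A' S : Matrix (Fin a) (Fin a) ℤ}
    {B B' T : Matrix (Fin b) (Fin b) ℤ} (hS : IsSimilitude k A A' S) (hT : IsSimilitude k B B' T) :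
    IsSimilitude k (dsum A B) (dsum A' B') (dsum S T) where
  det_ne_zero := by
    rw [det_dsum]
    exact mul_ne_zero hS.det_ne_zero hT.det_ne_zero
  gram_eq := by
    rw [dsum_transpose, dsum_mul_dsum, dsum_mul_dsum, hS.gram_eq, hT.gram_eq, dsum_zsmul]

theorem dsum_mulVec_append (A : Matrix (Fin a) (Fin a) ℤ) (B : Matrix (Fin b) (Fin b) ℤ)
    (x : Fin a → ℤ) (y : Fin b → ℤ) :
    dsum A B *ᵥ Fin.append x y = Fin.append (A *ᵥ x) (B *ᵥ y) := by
  rw [dsum, Matrix.reindex_apply, Matrix.submatrix_mulVec_equiv, Equiv.symm_symm]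
  ext i
  refine Fin.addCases (fun i ↦ ?_) (fun i ↦ ?_) i <;>
    simp [Matrix.fromBlocks_mulVec, Function.comp_def]

theorem exists_append_eq (z : Fin (a + b) → ℤ) :
    ∃ (x : Fin a → ℤ) (y : Fin b → ℤ), Fin.append x y = z :=
  ⟨_, _, Fin.append_castAdd_natAdd⟩

theorem append_dotProduct_append (x x' : Fin a → ℤ) (y y' : Fin b → ℤ) :
    Fin.append x y ⬝ᵥ Fin.append x' y' = x ⬝ᵥ x' + y ⬝ᵥ y' := by
  simp [dotProduct, Fin.sum_univ_add]

theorem append_mem_range_dsum_mulVec {A : Matrix (Fin a) (Fin a) ℤ}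
    {B : Matrix (Fin b) (Fin b) ℤ} {x : Fin a → ℤ} {y : Fin b → ℤ} :
    Fin.append x y ∈ Set.range (dsum A B).mulVec ↔
      x ∈ Set.range A.mulVec ∧ y ∈ Set.range B.mulVec := by
  constructor
  · rintro ⟨z, hz⟩
    obtain ⟨u, v, rfl⟩ := exists_append_eq z
    rw [dsum_mulVec_append] at hz
    refine ⟨⟨u, funext fun i ↦ ?_⟩, v, funext fun i ↦ ?_⟩
    · simpa using congrFun hz (Fin.castAdd b i)
    · simpa using congrFun hz (Fin.natAdd a i)
  · rintro ⟨⟨u, rfl⟩, v, rfl⟩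
    exact ⟨Fin.append u v, dsum_mulVec_append A B u v⟩

theorem append_mem_quadraticRadical_dsum {m : ℤ} {A : Matrix (Fin a) (Fin a) ℤ}
    {B : Matrix (Fin b) (Fin b) ℤ} {x : Fin a → ℤ} {y : Fin b → ℤ} :
    Fin.append x y ∈ quadraticRadical m (dsum A B) ↔
      (∀ i, m ∣ (A *ᵥ x) i) ∧ (∀ i, m ∣ (B *ᵥ y) i) ∧
        2 * m ∣ x ⬝ᵥ A *ᵥ x + y ⬝ᵥ B *ᵥ y := by
  simp only [quadraticRadical, Set.mem_ofPred_eq, dsum_mulVec_append, append_dotProduct_append,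
    Fin.forall_fin_add, Fin.append_left, Fin.append_right, and_assoc]

end DirectSum

section EvenUnimodular

theorem two_dvd_dotProduct_mulVec_of_isSymm {n : ℕ} {A : Matrix (Fin n) (Fin n) ℤ}
    (hA : A.IsSymm) (hdiag : ∀ i, 2 ∣ A i i) (x : Fin n → ℤ) : 2 ∣ x ⬝ᵥ A *ᵥ x := by
  -- An even symmetric matrix has the form `L + Lᵀ`, and `xᵀLx = xᵀLᵀx`.
  let L : Matrix (Fin n) (Fin n) ℤ :=
    .of fun i j ↦ if i < j then A i j else if i = j then A i i / 2 else 0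
  have hL : A = L + Lᵀ := by
    ext i j
    obtain hij | rfl | hij := lt_trichotomy i j
    · simp [L, hij, hij.ne', hij.not_gt]
    · simp [L, ← two_mul, Int.mul_ediv_cancel' (hdiag i)]
    · simp [L, hij, hij.ne', hij.not_gt, hA.apply i j]
  rw [hL, Matrix.add_mulVec, dotProduct_add, Matrix.dotProduct_transpose_mulVec, ← two_mul]
  exact dvd_mul_right 2 _

theorem latE8_eq_neg_cartanMatrix : latE8 = -CartanMatrix.E₈ := by decide

theorem isUnit_det_latE8 : IsUnit latE8.det := by
  simp [latE8_eq_neg_cartanMatrix, Matrix.det_neg, CartanMatrix.E₈_det]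

theorem two_dvd_latE8_norm (x : Fin 8 → ℤ) : 2 ∣ x ⬝ᵥ latE8 *ᵥ x := by
  rw [latE8_eq_neg_cartanMatrix]
  exact two_dvd_dotProduct_mulVec_of_isSymm CartanMatrix.E₈_isSymm.neg (by simp) x

end EvenUnimodular

section Nodal

/-- The Gram matrix of the lattice `U ⊕ ⟨4⟩`. -/
def coreGram : Matrix (Fin 3) (Fin 3) ℤ := dsum latU !![4]

/-- The Gram matrix of the lattice `⟨2⟩ ⊕ U(2)`. -/
def coreGram' : Matrix (Fin 3) (Fin 3) ℤ := dsum !![(2 : ℤ)] (2 • latU)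

/-- The embedding `(u, a) ↦ (2a, u)` of `U ⊕ ⟨4⟩` into `⟨2⟩ ⊕ U(2)`. -/
def coreEmbedding : Matrix (Fin 3) (Fin 3) ℤ := !![0, 0, 2; 1, 0, 0; 0, 1, 0]

/-- The embedding `(a, u) ↦ (2u, a)` of `⟨2⟩ ⊕ U(2)` into `U ⊕ ⟨4⟩`. -/
def coreEmbedding' : Matrix (Fin 3) (Fin 3) ℤ := !![0, 2, 0; 0, 0, 2; 1, 0, 0]

theorem coreEmbedding'_mul_coreEmbedding : coreEmbedding' * coreEmbedding = (2 : ℤ) • 1 := by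
  decide

theorem isSimilitude_coreEmbedding :
    IsSimilitude 2 coreGram coreGram' coreEmbedding where
  det_ne_zero := by decide
  gram_eq := by decide

theorem isSimilitude_coreEmbedding' :
    IsSimilitude 2 coreGram' coreGram coreEmbedding' where
  det_ne_zero := by decide
  gram_eq := by decide

theorem mem_range_coreEmbedding_mulVec {u : Fin 3 → ℤ} :
    u ∈ Set.range coreEmbedding.mulVec ↔ 2 ∣ u 0 := by
  constructor
  · rintro ⟨v, rfl⟩
    simp [coreEmbedding, Matrix.mulVec]
  · rintro ⟨c, hc⟩
    refine ⟨![u 1, u 2, c], ?_⟩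
    ext i
    fin_cases i <;> simp [coreEmbedding, Matrix.mulVec, hc]

theorem mem_range_coreEmbedding'_mulVec {u : Fin 3 → ℤ} :
    u ∈ Set.range coreEmbedding'.mulVec ↔ 2 ∣ u 0 ∧ 2 ∣ u 1 := by
  constructor
  · rintro ⟨v, rfl⟩
    simp [coreEmbedding', Matrix.mulVec]
  · rintro ⟨⟨c, hc⟩, d, hd⟩
    refine ⟨![u 2, c, d], ?_⟩
    ext i
    fin_cases i <;> simp [coreEmbedding', Matrix.mulVec, hc, hd]

theorem coreGram_mulVec (u : Fin 3 → ℤ) : coreGram *ᵥ u = ![u 1, u 0, 4 * u 2] := by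
  have coreGram_eq : coreGram = !![0, 1, 0; 1, 0, 0; 0, 0, 4] := by decide
  ext i
  fin_cases i <;> simp [coreGram_eq, Matrix.mulVec, Matrix.vecHead, Matrix.vecTail]

theorem coreGram'_mulVec (u : Fin 3 → ℤ) : coreGram' *ᵥ u = ![2 * u 0, 2 * u 2, 2 * u 1] := by
  have coreGram'_eq : coreGram' = !![2, 0, 0; 0, 0, 2; 0, 2, 0] := by decide
  ext i
  fin_cases i <;> simp [coreGram'_eq, Matrix.mulVec, Matrix.vecHead, Matrix.vecTail]

variable {r : ℕ} {E : Matrix (Fin r) (Fin r) ℤ}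

theorem range_coreEmbedding_eq_quadraticRadical (hE : IsUnit E.det) :
    Set.range (dsum coreEmbedding ((2 : ℤ) • 1)).mulVec =
      quadraticRadical 2 (dsum coreGram' E) := by
  ext x
  obtain ⟨u, e, rfl⟩ := exists_append_eq x
  rw [append_mem_range_dsum_mulVec, append_mem_quadraticRadical_dsum,
    mem_range_coreEmbedding_mulVec, mem_range_zsmul_one_mulVec, forall_dvd_mulVec_iff hE,
    coreGram'_mulVec]
  have hcore : ∀ i, 2 ∣ ![2 * u 0, 2 * u 2, 2 * u 1] i := by
    simp [Fin.forall_fin_succ]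
  have hcore_norm : u ⬝ᵥ ![2 * u 0, 2 * u 2, 2 * u 1] = 2 * u 0 ^ 2 + 2 * 2 * (u 1 * u 2) := by
    simp only [vec3_dotProduct, Matrix.cons_val]
    ring
  simp only [hcore, implies_true, true_and, and_comm (a := 2 ∣ u 0)]
  refine and_congr_right fun he ↦ ?_
  have he_norm : 2 * 2 ∣ e ⬝ᵥ E *ᵥ e := mul_dvd_dotProduct he (dvd_mulVec_of_forall_dvd he E)
  rw [dvd_add_left he_norm, hcore_norm, dvd_add_left (dvd_mul_right _ _),
    mul_dvd_mul_iff_left two_ne_zero, Int.prime_two.dvd_pow_iff_dvd two_ne_zero]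

theorem range_coreEmbedding'_eq_quadraticRadical (hE : ∀ e, 2 ∣ e ⬝ᵥ E *ᵥ e) :
    Set.range (dsum coreEmbedding' 1).mulVec =
      quadraticRadical 2 (dsum coreGram (2 • E)) := by
  ext x
  obtain ⟨u, e, rfl⟩ := exists_append_eq x
  rw [append_mem_range_dsum_mulVec, append_mem_quadraticRadical_dsum,
    mem_range_coreEmbedding'_mulVec, coreGram_mulVec, Matrix.smul_mulVec, dotProduct_smul]
  have he : ∀ i, 2 ∣ (2 • E *ᵥ e) i := fun i ↦ by simp
  have he_norm : 2 * 2 ∣ 2 • (e ⬝ᵥ E *ᵥ e) := by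
    rw [nsmul_eq_mul]
    exact mul_dvd_mul_left 2 (hE e)
  have he_range : e ∈ Set.range (1 : Matrix (Fin r) (Fin r) ℤ).mulVec := ⟨e, Matrix.one_mulVec e⟩
  have hcore : (∀ i, 2 ∣ ![u 1, u 0, 4 * u 2] i) ↔ 2 ∣ u 0 ∧ 2 ∣ u 1 := by
    have hdvd : 2 ∣ 4 * u 2 := Dvd.dvd.mul_right (by norm_num) _
    simp [Fin.forall_fin_succ, hdvd, and_comm]
  have hcore_norm : u ⬝ᵥ ![u 1, u 0, 4 * u 2] = 2 * (u 0 * u 1) + 2 * 2 * u 2 ^ 2 := by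
    simp only [vec3_dotProduct, Matrix.cons_val]
    ring
  rw [dvd_add_left he_norm, hcore, hcore_norm]
  simp only [he_range, he, implies_true, true_and, and_true]
  refine ⟨fun hu ↦ ⟨hu, ?_⟩, And.left⟩
  exact dvd_add (mul_dvd_mul_left 2 (hu.1.mul_right _)) (dvd_mul_right _ _)

theorem nodal_orbitSpace_equiv_general (hE : IsUnit E.det) (hE_even : ∀ e, 2 ∣ e ⬝ᵥ E *ᵥ e) :
    Nonempty (OrbitSpace (dsum (dsum latU !![4]) (2 • E)) ≃
      OrbitSpace (dsum (dsum !![2] (2 • latU)) E)) := by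
  have hmul : dsum coreEmbedding' 1 * dsum coreEmbedding ((2 : ℤ) • (1 : Matrix (Fin r) _ _)) =
      (2 : ℤ) • 1 := by
    rw [dsum_mul_dsum, coreEmbedding'_mul_coreEmbedding, one_mul, dsum_zsmul, dsum_one_one]
  exact nonempty_orbitSpace_equiv_of_range_eq_quadraticRadical two_pos
    (isSimilitude_coreEmbedding.dsum (isSimilitude_smul_one two_ne_zero E))
    (isSimilitude_coreEmbedding'.dsum (isSimilitude_one E)) hmul
    (range_coreEmbedding_eq_quadraticRadical hE)
    (range_coreEmbedding'_eq_quadraticRadical hE_even)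

end Nodal

/-- There is a bijection between `D(N)/O(N)` and `D(N')/O(N')` for
`N = U ⊕ ⟨4⟩ ⊕ E8(2)` and `N' = ⟨2⟩ ⊕ U(2) ⊕ E8`. -/
theorem nodal_orbitSpace_equiv : Nonempty (OrbitSpace gramN ≃ OrbitSpace gramN') :=
  nodal_orbitSpace_equiv_general isUnit_det_latE8 two_dvd_latE8_norm
end

section
/- Let T be the odd lattice ⟨1⟩ ⊕ U ⊕ E8(2) of rank 11 and signature (2,9). The set T₀ of vectors of T of even norm is a sublattice of index 2 in T, and T₀ is isometric to the lattice U ⊕ ⟨4⟩ ⊕ E8(2). -/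
open Matrix

/-- The bilinear form of the lattice with Gram matrix `G` : `x ⋅ y = xᵀ G y`. -/
def bform {n : ℕ} (G : Matrix (Fin n) (Fin n) ℤ) (x y : Fin n → ℤ) : ℤ :=
  x ⬝ᵥ G.mulVec y


/-- `T = ⟨1⟩ ⊕ U ⊕ E8(2)`, an odd lattice of rank 11 and signature (2,9). -/
def gramT : Matrix (Fin 11) (Fin 11) ℤ := dsum (dsum !![(1 : ℤ)] latU) (2 • latE8)

/-- `U ⊕ ⟨4⟩ ⊕ E8(2)`. -/
def gramT0 : Matrix (Fin 11) (Fin 11) ℤ := dsum (dsum latU !![(4 : ℤ)]) (2 • latE8)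

/-!
In an integral lattice the parity of the norm is additive, since the cross term of `(x + y)²` is
`2 (x ⋅ y)`. The even vectors therefore form the kernel of a homomorphism to `ℤ/2`, which is
surjective when some vector has odd norm. For odd `a`, the even vectors of `⟨a⟩` are the even
multiples of a generator and form a copy of `⟨4a⟩`; an even orthogonal summand lies entirely in the
even part. Applied to `⟨1⟩ ⊕ U ⊕ E8(2)` this gives `⟨4⟩ ⊕ U ⊕ E8(2)`.
-/

section EvenSublattice

variable {n : ℕ} {G : Matrix (Fin n) (Fin n) ℤ}

lemma bform_comm (hG : G.IsSymm) (x y : Fin n → ℤ) : bform G x y = bform G y x := by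
  rw [bform, bform, dotProduct_mulVec, dotProduct_comm, ← mulVec_transpose, hG.eq]

lemma bform_add_self (hG : G.IsSymm) (x y : Fin n → ℤ) :
    bform G (x + y) (x + y) = bform G x x + 2 * bform G x y + bform G y y := by
  have cross_terms : bform G y x = bform G x y := bform_comm hG y x
  simp only [bform, mulVec_add, dotProduct_add, add_dotProduct] at cross_terms ⊢
  linarith

lemma bform_smul_smul (c d : ℤ) (x y : Fin n → ℤ) :
    bform G (c • x) (d • y) = c * d * bform G x y := by
  simp only [bform, mulVec_smul, dotProduct_smul, smul_dotProduct, smul_eq_mul]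
  ring

lemma even_bform_add_self (hG : G.IsSymm) (x y : Fin n → ℤ) :
    Even (bform G (x + y) (x + y)) ↔ (Even (bform G x x) ↔ Even (bform G y y)) := by
  rw [bform_add_self hG, Int.even_add, Int.even_add, iff_true_right (even_two_mul _)]

/-- The sublattice of vectors of even norm in the lattice with Gram matrix `G`. -/
def evenSublattice (G : Matrix (Fin n) (Fin n) ℤ) (hG : G.IsSymm) : Submodule ℤ (Fin n → ℤ) where
  carrier := {x | Even (bform G x x)}
  zero_mem' := by simp [bform]
  add_mem' {x y} hx hy := (even_bform_add_self hG x y).2 (iff_of_true hx hy)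
  smul_mem' c x hx := by
    change Even (bform G (c • x) (c • x))
    rw [bform_smul_smul]
    exact Even.mul_left hx (c * c)

lemma mem_evenSublattice (hG : G.IsSymm) {x : Fin n → ℤ} :
    x ∈ evenSublattice G hG ↔ Even (bform G x x) :=
  Iff.rfl

theorem index_evenSublattice (hG : G.IsSymm) (hodd : ∃ v, Odd (bform G v v)) :
    (evenSublattice G hG).toAddSubgroup.index = 2 := by
  obtain ⟨v, hv⟩ := hodd
  refine AddSubgroup.index_eq_two_iff.2 ⟨v, fun x => ?_⟩
  simp only [Submodule.mem_toAddSubgroup, mem_evenSublattice, even_bform_add_self hG,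
    iff_false_right (Int.not_even_iff_odd.2 hv)]
  exact xor_not_left.2 Iff.rfl

end EvenSublattice

section DirectSum

variable {a b : ℕ} {A : Matrix (Fin a) (Fin a) ℤ} {B : Matrix (Fin b) (Fin b) ℤ}

lemma isSymm_dsum (hA : A.IsSymm) (hB : B.IsSymm) : (dsum A B).IsSymm :=
  (hA.fromBlocks transpose_zero hB).submatrix _

/-- The decomposition of the coordinates of `A ⊕ B` into those of `A` and those of `B`. -/
def dsumEquivProd (a b : ℕ) : (Fin (a + b) → ℤ) ≃ₗ[ℤ] (Fin a → ℤ) × (Fin b → ℤ) :=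
  LinearEquiv.funCongrLeft ℤ ℤ finSumFinEquiv ≪≫ₗ
    LinearEquiv.sumArrowLequivProdArrow (Fin a) (Fin b) ℤ ℤ

lemma bform_dsum (x y : Fin (a + b) → ℤ) :
    bform (dsum A B) x y =
      bform A (dsumEquivProd a b x).1 (dsumEquivProd a b y).1 +
        bform B (dsumEquivProd a b x).2 (dsumEquivProd a b y).2 := by
  simp [bform, dsum, dsumEquivProd, dotProduct, mulVec, Fin.sum_univ_add, LinearEquiv.funCongrLeft]

lemma exists_odd_bform_dsum (hA : ∃ v, Odd (bform A v v)) :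
    ∃ v, Odd (bform (dsum A B) v v) := by
  obtain ⟨v, hv⟩ := hA
  refine ⟨(dsumEquivProd a b).symm (v, 0), ?_⟩
  rw [bform_dsum, LinearEquiv.apply_symm_apply]
  simpa [bform] using hv

end DirectSum

/-- The lattice with Gram matrix `G` is even. Nondegeneracy is not part of the definition. -/
structure IsEvenLattice {n : ℕ} (G : Matrix (Fin n) (Fin n) ℤ) : Prop where
  isSymm : G.IsSymm
  even_bform_self : ∀ x, Even (bform G x x)

lemma isEvenLattice_latU : IsEvenLattice latU where
  isSymm := by decide
  even_bform_self x := ⟨x 0 * x 1, by simp [bform, dotProduct, mulVec, Fin.sum_univ_two, mul_comm]⟩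

lemma isEvenLattice_two_smul {n : ℕ} {G : Matrix (Fin n) (Fin n) ℤ} (hG : G.IsSymm) :
    IsEvenLattice (2 • G) where
  isSymm := hG.smul 2
  even_bform_self x := by
    rw [bform, smul_mulVec, dotProduct_smul, two_nsmul]
    exact Even.add_self _

/-- The lattice with Gram matrix `H` is isometric to the even sublattice of the lattice with Gram
matrix `G`. The isometry is encoded as an embedding into the ambient lattice, so that it can be
composed and summed without passing to subtypes. -/
def IsEvenPart {m n : ℕ} (H : Matrix (Fin m) (Fin m) ℤ) (G : Matrix (Fin n) (Fin n) ℤ) : Prop :=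
  ∃ f : (Fin m → ℤ) →ₗ[ℤ] (Fin n → ℤ),
    Function.Injective f ∧ (∀ x y, bform G (f x) (f y) = bform H x y) ∧
      ∀ z, z ∈ LinearMap.range f ↔ Even (bform G z z)

lemma bform_rankOne (c : ℤ) (x y : Fin 1 → ℤ) : bform !![c] x y = c * (x 0 * y 0) := by
  simp only [bform, dotProduct, mulVec, Fin.sum_univ_one, of_apply, cons_val_zero]
  ring

lemma isEvenPart_rankOne {c : ℤ} (hc : Odd c) : IsEvenPart !![4 * c] !![c] := by
  refine ⟨(2 : ℤ) • LinearMap.id, ?_, fun x y => ?_, fun z => ?_⟩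
  · exact smul_right_injective _ (two_ne_zero (α := ℤ))
  · simp only [LinearMap.smul_apply, LinearMap.id_apply, bform_smul_smul, bform_rankOne]
    ring
  · have even_norm_iff : Even (bform !![c] z z) ↔ Even (z 0) := by
      simp [bform_rankOne, Int.even_mul, Int.not_even_iff_odd.2 hc]
    rw [even_norm_iff, even_iff_exists_two_mul]
    constructor
    · rintro ⟨y, rfl⟩
      exact ⟨y 0, by simp⟩
    · rintro ⟨k, hk⟩
      exact ⟨fun _ => k, funext fun i => by simp [Subsingleton.elim i 0, hk]⟩

namespace IsEvenPart

variable {a b m n : ℕ} {A : Matrix (Fin a) (Fin a) ℤ} {B : Matrix (Fin b) (Fin b) ℤ}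
  {H : Matrix (Fin m) (Fin m) ℤ} {G : Matrix (Fin n) (Fin n) ℤ}

lemma dsum_isEvenLattice (h : IsEvenPart H G) (hB : IsEvenLattice B) :
    IsEvenPart (dsum H B) (dsum G B) := by
  obtain ⟨f, f_injective, bform_f, mem_range_f⟩ := h
  let g : (Fin (m + b) → ℤ) →ₗ[ℤ] (Fin (n + b) → ℤ) :=
    (dsumEquivProd n b).symm ∘ₗ f.prodMap LinearMap.id ∘ₗ (dsumEquivProd m b).toLinearMap
  refine ⟨g, ?_, fun x y => ?_, fun z => ?_⟩
  · exact (dsumEquivProd n b).symm.injective.comp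
      ((f_injective.prodMap Function.injective_id).comp (dsumEquivProd m b).injective)
  · simp [g, bform_dsum, bform_f]
  · have mem_range_g : z ∈ LinearMap.range g ↔
        (dsumEquivProd n b z).1 ∈ LinearMap.range f := by
      simp [g, (dsumEquivProd m b).symm.surjective.exists, LinearEquiv.symm_apply_eq,
        Prod.ext_iff]
    rw [mem_range_g, mem_range_f, bform_dsum, Int.even_add,
      iff_true_right (hB.even_bform_self _)]

lemma dsum_swap (h : IsEvenPart (dsum A B) G) : IsEvenPart (dsum B A) G := by
  obtain ⟨f, f_injective, bform_f, mem_range_f⟩ := h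
  let swap : (Fin (b + a) → ℤ) ≃ₗ[ℤ] (Fin (a + b) → ℤ) :=
    dsumEquivProd b a ≪≫ₗ LinearEquiv.prodComm ℤ _ _ ≪≫ₗ (dsumEquivProd a b).symm
  refine ⟨f ∘ₗ swap, f_injective.comp swap.injective, fun x y => ?_, fun z => ?_⟩
  · simp [bform_f, bform_dsum, swap, add_comm]
  · rw [LinearMap.range_comp_of_range_eq_top f swap.range, mem_range_f]

theorem exists_linearEquiv (h : IsEvenPart H G) (hG : G.IsSymm) :
    ∃ e : evenSublattice G hG ≃ₗ[ℤ] (Fin m → ℤ),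
      ∀ x y : evenSublattice G hG, bform H (e x) (e y) = bform G x y := by
  obtain ⟨f, f_injective, bform_f, mem_range_f⟩ := h
  have range_f : LinearMap.range f = evenSublattice G hG := Submodule.ext mem_range_f
  let e := LinearEquiv.ofInjective f f_injective ≪≫ₗ LinearEquiv.ofEq _ _ range_f
  have f_e_symm (x) : f (e.symm x) = x := congrArg Subtype.val (e.apply_symm_apply x)
  exact ⟨e.symm, fun x y => by rw [← bform_f, f_e_symm, f_e_symm]⟩

end IsEvenPart

theorem even_sublattice_odd_coble_general {m n : ℕ} {c : ℤ} {M : Matrix (Fin m) (Fin m) ℤ}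
    {N : Matrix (Fin n) (Fin n) ℤ} (hc : Odd c) (hM : IsEvenLattice M) (hN : IsEvenLattice N) :
    ∃ S : Submodule ℤ (Fin (1 + m + n) → ℤ),
      (∀ x, x ∈ S ↔ Even (bform (dsum (dsum !![c] M) N) x x)) ∧
      S.toAddSubgroup.index = 2 ∧
      (∃ e : S ≃ₗ[ℤ] (Fin (m + 1 + n) → ℤ),
        ∀ x y : S, bform (dsum (dsum M !![4 * c]) N) (e x) (e y) =
          bform (dsum (dsum !![c] M) N) x y) := by
  have rankOne_isSymm : (!![c]).IsSymm := IsSymm.ext fun i j => by rw [Subsingleton.elim i j]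
  have isSymm : (dsum (dsum !![c] M) N).IsSymm :=
    isSymm_dsum (isSymm_dsum rankOne_isSymm hM.isSymm) hN.isSymm
  have exists_odd : ∃ v, Odd (bform !![c] v v) := ⟨1, by simpa [bform_rankOne] using hc⟩
  have isEvenPart : IsEvenPart (dsum (dsum M !![4 * c]) N) (dsum (dsum !![c] M) N) :=
    ((isEvenPart_rankOne hc).dsum_isEvenLattice hM).dsum_swap.dsum_isEvenLattice hN
  exact ⟨evenSublattice _ isSymm, fun _ => mem_evenSublattice isSymm,
    index_evenSublattice isSymm (exists_odd_bform_dsum (exists_odd_bform_dsum exists_odd)),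
    isEvenPart.exists_linearEquiv isSymm⟩

/-- The set `T₀` of vectors of even norm in `T = ⟨1⟩ ⊕ U ⊕ E8(2)` is a sublattice of
index 2 in `T`, and it is isometric to `U ⊕ ⟨4⟩ ⊕ E8(2)`. -/
theorem even_sublattice_odd_coble :
    ∃ S : Submodule ℤ (Fin 11 → ℤ),
      (∀ x, x ∈ S ↔ Even (bform gramT x x)) ∧
      S.toAddSubgroup.index = 2 ∧
      (∃ e : S ≃ₗ[ℤ] (Fin 11 → ℤ),
        ∀ x y : S, bform gramT0 (e x) (e y) = bform gramT x y) :=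
  even_sublattice_odd_coble_general odd_one isEvenLattice_latU
    (isEvenLattice_two_smul (G := latE8) (by decide))
end

section
/- Let M be the even lattice U ⊕ D8 ⊕ A1 of rank 11. Then the group O(q_M) of automorphisms of the discriminant group A_M preserving the discriminant quadratic form q_M has order 2, and the natural homomorphism O(M) → O(q_M) is surjective. -/
open Matrix

/-- The negative definite lattice `D₈` (negative of the Cartan matrix of `D₈`). -/
abbrev latD8 : Matrix (Fin 8) (Fin 8) ℤ :=
  !![-2,  1,  0,  0,  0,  0,  0,  0;
      1, -2,  1,  0,  0,  0,  0,  0;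
      0,  1, -2,  1,  0,  0,  0,  0;
      0,  0,  1, -2,  1,  0,  0,  0;
      0,  0,  0,  1, -2,  1,  0,  0;
      0,  0,  0,  0,  1, -2,  1,  1;
      0,  0,  0,  0,  0,  1, -2,  0;
      0,  0,  0,  0,  0,  1,  0, -2]

/-- Coordinatewise coercion `ℤⁿ → ℚⁿ` as a `ℤ`-linear map. -/
def castMap (n : ℕ) : (Fin n → ℤ) →ₗ[ℤ] (Fin n → ℚ) :=
  (Algebra.linearMap ℤ ℚ).compLeft (Fin n)

/-- The standard lattice `ℤⁿ ⊆ ℚⁿ`. -/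
def intLat (n : ℕ) : Submodule ℤ (Fin n → ℚ) := LinearMap.range (castMap n)

/-- The dual lattice `L* = {x ∈ ℚⁿ : Gx ∈ ℤⁿ}` of the lattice with Gram matrix `G`. -/
def dualLat {n : ℕ} (G : Matrix (Fin n) (Fin n) ℤ) : Submodule ℤ (Fin n → ℚ) :=
  Submodule.comap ((Matrix.mulVecLin (G.map (Int.cast : ℤ → ℚ))).restrictScalars ℤ) (intLat n)

/-- The discriminant group `A_L = L*/ℤⁿ`. -/
abbrev discGroup {n : ℕ} (G : Matrix (Fin n) (Fin n) ℤ) :=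
  dualLat G ⧸ (intLat n).comap (dualLat G).subtype

/-- The class of a dual vector in the discriminant group `A_L`. -/
def dmk {n : ℕ} {G : Matrix (Fin n) (Fin n) ℤ} (x : dualLat G) : discGroup G :=
  Submodule.Quotient.mk x

/-- The rational quadratic form `x ↦ xᵀGx` on `ℚⁿ`; on the dual lattice of an even lattice,
its reduction mod `2ℤ` is the discriminant quadratic form `q_L`. -/
def qQ {n : ℕ} (G : Matrix (Fin n) (Fin n) ℤ) (x : Fin n → ℚ) : ℚ :=
  x ⬝ᵥ (G.map (Int.cast : ℤ → ℚ)).mulVec x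

/-- An automorphism of the discriminant group preserves the discriminant quadratic form
`q_L : A_L → ℚ/2ℤ`. -/
def PreservesDiscForm {n : ℕ} {G : Matrix (Fin n) (Fin n) ℤ}
    (φ : discGroup G ≃+ discGroup G) : Prop :=
  ∀ x y : dualLat G, φ (dmk x) = dmk y →
    ∃ m : ℤ, qQ G (y : Fin n → ℚ) - qQ G (x : Fin n → ℚ) = 2 * m

/-- `M = U ⊕ D8 ⊕ A1`, an even lattice of rank 11. -/
def gramM : Matrix (Fin 11) (Fin 11) ℤ := dsum (dsum latU latD8) !![(-2 : ℤ)]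

/-!
For an even lattice `L` the discriminant form takes values in `ℚ/2ℤ` and is invariant under the
natural action of `O(L)` on `A_L`.

For `M = U ⊕ D₈ ⊕ A₁` we have `2 M* ⊆ M`, and reading the condition `G z ∈ 2 ℤⁿ` for `z / 2 ∈ M*`
row by row shows that `A_M ≅ (ℤ/2)³`, generated by the two half-spin classes `s₁`, `s₂` of `D₈` and
the class `r` of half of the root of `A₁`. In these coordinates
`q(i s₁ + j s₂ + k r) = i j - k² / 2`. Hence `s₁` and `s₂` are the only nonzero isotropic elements
and `s₁ + s₂ + r` is the only element of norm `1 / 2`. An isometry of `A_M` fixes the latter and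
permutes the former, and since these three elements generate `A_M` it is the identity or the swap
of `s₁` and `s₂`. The swap is induced by the automorphism of the Dynkin diagram of `D₈`.
-/

section IntegralVectors

variable {m n : ℕ}

lemma castMap_apply (z : Fin n → ℤ) (i : Fin n) : castMap n z i = z i := rfl

lemma mulVec_castMap (A : Matrix (Fin m) (Fin n) ℤ) (z : Fin n → ℤ) :
    A.map (Int.cast : ℤ → ℚ) *ᵥ castMap n z = castMap m (A *ᵥ z) :=
  funext fun i ↦ ((Int.castRingHom ℚ).map_mulVec A z i).symm

lemma mulVec_mem_intLat (A : Matrix (Fin m) (Fin n) ℤ) {x : Fin n → ℚ} (hx : x ∈ intLat n) :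
    A.map (Int.cast : ℤ → ℚ) *ᵥ x ∈ intLat m := by
  obtain ⟨z, rfl⟩ := hx
  exact ⟨A *ᵥ z, (mulVec_castMap A z).symm⟩

/-- The vector `z / d ∈ ℚⁿ` as a `ℤ`-linear function of `z ∈ ℤⁿ`; it is `0` for `d = 0`. When
`d L* ⊆ L`, all dual vectors are of this form. -/
def fracVec (d : ℤ) : (Fin n → ℤ) →ₗ[ℤ] (Fin n → ℚ) := (d : ℚ)⁻¹ • castMap n

lemma fracVec_apply (d : ℤ) (z : Fin n → ℤ) (i : Fin n) : fracVec d z i = (d : ℚ)⁻¹ * z i := rfl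

lemma mulVec_fracVec (A : Matrix (Fin m) (Fin n) ℤ) (d : ℤ) (z : Fin n → ℤ) :
    A.map (Int.cast : ℤ → ℚ) *ᵥ fracVec d z = fracVec d (A *ᵥ z) := by
  simp only [fracVec, LinearMap.smul_apply, Matrix.mulVec_smul, mulVec_castMap]

lemma fracVec_mem_intLat_iff {d : ℤ} (hd : d ≠ 0) {z : Fin n → ℤ} :
    fracVec d z ∈ intLat n ↔ ∀ i, d ∣ z i := by
  have hd' : (d : ℚ) ≠ 0 := Int.cast_ne_zero.mpr hd
  have key (a b : ℤ) : (b : ℚ) = (d : ℚ)⁻¹ * a ↔ a = d * b := by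
    rw [eq_inv_mul_iff_mul_eq₀ hd', eq_comm]
    norm_cast
  simp only [intLat, LinearMap.mem_range, funext_iff, castMap_apply, fracVec_apply, key]
  exact (Classical.skolem (p := fun i y ↦ z i = d * y)).symm

end IntegralVectors

section DualLattice

variable {n : ℕ} {G : Matrix (Fin n) (Fin n) ℤ}

lemma mem_dualLat_iff {x : Fin n → ℚ} :
    x ∈ dualLat G ↔ G.map (Int.cast : ℤ → ℚ) *ᵥ x ∈ intLat n := Iff.rfl

lemma fracVec_mem_dualLat_iff {d : ℤ} (hd : d ≠ 0) {z : Fin n → ℤ} :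
    fracVec d z ∈ dualLat G ↔ ∀ i, d ∣ (G *ᵥ z) i := by
  rw [mem_dualLat_iff, mulVec_fracVec, fracVec_mem_intLat_iff hd]

lemma exists_fracVec_eq_of_mul_eq_smul_one {H : Matrix (Fin n) (Fin n) ℤ} {d : ℤ} (hd : d ≠ 0)
    (hHG : H * G = d • 1) {x : Fin n → ℚ} (hx : x ∈ dualLat G) : ∃ z, fracVec d z = x := by
  obtain ⟨z, hz⟩ := mulVec_mem_intLat H (mem_dualLat_iff.mp hx)
  have hdx : castMap n z = (d : ℚ) • x := by
    have hd1 : (d • (1 : Matrix (Fin n) (Fin n) ℤ)).map (Int.cast : ℤ → ℚ) = (d : ℚ) • 1 := by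
      ext i j
      simp only [Matrix.map_apply, Matrix.smul_apply, Matrix.one_apply, smul_eq_mul]
      push_cast
      rfl
    rw [hz, Matrix.mulVec_mulVec, ← Matrix.map_mul_intCast, hHG, hd1, Matrix.smul_mulVec,
      Matrix.one_mulVec]
  refine ⟨z, ?_⟩
  rw [fracVec, LinearMap.smul_apply, hdx, inv_smul_smul₀ (Int.cast_ne_zero.mpr hd)]

lemma dmk_eq_dmk_iff {x y : dualLat G} :
    (dmk x : discGroup G) = dmk y ↔ (x - y : Fin n → ℚ) ∈ intLat n :=
  Submodule.Quotient.eq _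

lemma dmk_surjective : Function.Surjective (dmk : dualLat G → discGroup G) :=
  Submodule.Quotient.mk_surjective _

end DualLattice

section DiscriminantForm

variable {n : ℕ} {G : Matrix (Fin n) (Fin n) ℤ}

/-- The lattice with Gram matrix `G` is even, expressed through its Gram matrix: `G` is symmetric
and the basis vectors have even norm. -/
structure IsEvenGram (G : Matrix (Fin n) (Fin n) ℤ) : Prop where
  isSymm : G.IsSymm
  even_diag : ∀ i, Even (G i i)

lemma IsEvenGram.exists_add_transpose (hG : IsEvenGram G) :
    ∃ B : Matrix (Fin n) (Fin n) ℤ, B + Bᵀ = G := by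
  refine ⟨.of fun i j ↦ if i < j then G i j else if i = j then G i i / 2 else 0, ?_⟩
  ext i j
  rcases lt_trichotomy i j with h | rfl | h
  · simp [h, h.not_gt, h.ne']
  · obtain ⟨a, ha⟩ := hG.even_diag i
    simp only [Matrix.add_apply, Matrix.transpose_apply, Matrix.of_apply, lt_irrefl, if_true,
      if_false]
    omega
  · simp [h, h.not_gt, h.ne', hG.isSymm.apply]

lemma IsEvenGram.even_dotProduct_mulVec (hG : IsEvenGram G) (z : Fin n → ℤ) :
    Even (z ⬝ᵥ G *ᵥ z) := by
  obtain ⟨B, rfl⟩ := hG.exists_add_transpose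
  refine ⟨z ⬝ᵥ B *ᵥ z, ?_⟩
  rw [Matrix.add_mulVec, dotProduct_add, Matrix.mulVec_transpose, dotProduct_comm z (z ᵥ* B),
    ← Matrix.dotProduct_mulVec]

lemma dotProduct_castMap (z w : Fin n → ℤ) : castMap n z ⬝ᵥ castMap n w = ((z ⬝ᵥ w : ℤ) : ℚ) :=
  ((Int.castRingHom ℚ).map_dotProduct z w).symm

lemma qQ_add (hG : G.IsSymm) (x y : Fin n → ℚ) :
    qQ G (x + y) = qQ G x + 2 * (x ⬝ᵥ G.map (Int.cast : ℤ → ℚ) *ᵥ y) + qQ G y := by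
  have hsymm : y ⬝ᵥ G.map (Int.cast : ℤ → ℚ) *ᵥ x = x ⬝ᵥ G.map (Int.cast : ℤ → ℚ) *ᵥ y := by
    rw [Matrix.dotProduct_mulVec, ← Matrix.mulVec_transpose, dotProduct_comm,
      ← Matrix.transpose_map, hG.eq]
  simp only [qQ, Matrix.mulVec_add, add_dotProduct, dotProduct_add, hsymm]
  ring

lemma qQ_fracVec (d : ℤ) (z : Fin n → ℤ) :
    qQ G (fracVec d z) = ((z ⬝ᵥ G *ᵥ z : ℤ) : ℚ) / d ^ 2 := by
  rw [qQ, mulVec_fracVec, fracVec, LinearMap.smul_apply, LinearMap.smul_apply, smul_dotProduct,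
    dotProduct_smul, dotProduct_castMap, smul_eq_mul, smul_eq_mul]
  ring

lemma coe_addCircle_eq_iff {K : Type*} [CommRing K] {p a b : K} :
    (a : AddCircle p) = b ↔ ∃ m : ℤ, a - b = p * m := by
  rw [← sub_eq_zero, ← AddCircle.coe_sub, AddCircle.coe_eq_zero_iff]
  simp only [zsmul_eq_mul, mul_comm, eq_comm]

lemma IsEvenGram.coe_qQ_eq (hG : IsEvenGram G) {x y : Fin n → ℚ} (hy : y ∈ dualLat G)
    (hxy : x - y ∈ intLat n) : (qQ G x : AddCircle (2 : ℚ)) = qQ G y := by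
  obtain ⟨w, hw⟩ := mem_dualLat_iff.mp hy
  obtain ⟨z, hz⟩ := hxy
  obtain ⟨a, ha⟩ := hG.even_dotProduct_mulVec z
  refine coe_addCircle_eq_iff.mpr ⟨a + z ⬝ᵥ w, ?_⟩
  have hqz : qQ G (castMap n z) = a + a := by
    rw [qQ, mulVec_castMap, dotProduct_castMap, ha, Int.cast_add]
  rw [← sub_add_cancel x y, ← hz, qQ_add hG.isSymm, ← hw, dotProduct_castMap, hqz]
  push_cast
  ring

/-- The discriminant quadratic form `q_L : A_L → ℚ/2ℤ` of an even lattice, with `ℚ/2ℤ` encoded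
as `AddCircle (2 : ℚ)`. -/
def discForm (hG : IsEvenGram G) : discGroup G → AddCircle (2 : ℚ) :=
  Quotient.lift (fun x : dualLat G ↦ (qQ G x : AddCircle (2 : ℚ))) fun _ y hxy ↦
    hG.coe_qQ_eq y.2 (dmk_eq_dmk_iff.mp (Quotient.sound hxy))

lemma discForm_dmk (hG : IsEvenGram G) (x : dualLat G) :
    discForm hG (dmk x) = (qQ G x : AddCircle (2 : ℚ)) := rfl

lemma discForm_zero (hG : IsEvenGram G) : discForm hG 0 = 0 := by
  change ((qQ G 0 : ℚ) : AddCircle (2 : ℚ)) = 0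
  rw [qQ, zero_dotProduct, AddCircle.coe_zero]

lemma preservesDiscForm_iff (hG : IsEvenGram G) {φ : discGroup G ≃+ discGroup G} :
    PreservesDiscForm φ ↔ ∀ c, discForm hG (φ c) = discForm hG c := by
  simp only [PreservesDiscForm, ← coe_addCircle_eq_iff]
  constructor
  · intro h c
    obtain ⟨x, rfl⟩ := dmk_surjective c
    obtain ⟨y, hy⟩ := dmk_surjective (φ (dmk x))
    rw [← hy, discForm_dmk, discForm_dmk, h x y hy.symm]
  · intro h x y hxy
    rw [← discForm_dmk hG, ← discForm_dmk hG, ← hxy, h]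

end DiscriminantForm

section Isometries

variable {n : ℕ} {G : Matrix (Fin n) (Fin n) ℤ}

lemma transpose_mul_eq_mul_of_mul_eq_one {P Q : Matrix (Fin n) (Fin n) ℤ}
    (hP : Pᵀ * G * P = G) (hPQ : P * Q = 1) : Qᵀ * G = G * P := by
  calc Qᵀ * G = (P * Q)ᵀ * (G * P) := by
        rw [Matrix.transpose_mul, Matrix.mul_assoc, ← Matrix.mul_assoc Pᵀ, hP]
    _ = G * P := by rw [hPQ, Matrix.transpose_one, Matrix.one_mul]

/-- The orthogonal group `O(L)` of the lattice with Gram matrix `G`, as a subgroup of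
`GL(n, ℤ)`. -/
def isometryGroup (G : Matrix (Fin n) (Fin n) ℤ) : Subgroup (GL (Fin n) ℤ) where
  carrier := {P | P.1ᵀ * G * P.1 = G}
  one_mem' := by simp
  mul_mem' {P Q} hP hQ := by
    simp only [Set.mem_ofPred_eq] at hP hQ ⊢
    conv_rhs => rw [← hQ, ← hP]
    simp only [Units.val_mul, Matrix.transpose_mul, Matrix.mul_assoc]
  inv_mem' {P} hP := by
    rw [Set.mem_ofPred_eq, transpose_mul_eq_mul_of_mul_eq_one hP P.mul_inv, Matrix.mul_assoc,
      P.mul_inv, Matrix.mul_one]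

lemma mem_isometryGroup_iff {P : GL (Fin n) ℤ} :
    P ∈ isometryGroup G ↔ P.1ᵀ * G * P.1 = G := Iff.rfl

lemma mulVec_mem_dualLat (P : isometryGroup G) {x : Fin n → ℚ} (hx : x ∈ dualLat G) :
    P.1.1.map (Int.cast : ℤ → ℚ) *ᵥ x ∈ dualLat G := by
  rw [mem_dualLat_iff, Matrix.mulVec_mulVec, ← Matrix.map_mul_intCast,
    ← transpose_mul_eq_mul_of_mul_eq_one P.2 P.1.mul_inv, Matrix.map_mul_intCast,
    ← Matrix.mulVec_mulVec]
  exact mulVec_mem_intLat _ hx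

/-- The action of `O(L)` on the dual lattice `L*`. -/
def dualHom : isometryGroup G →* Module.End ℤ (dualLat G) where
  toFun P := ((P.1.1.map (Int.cast : ℤ → ℚ)).mulVecLin.restrictScalars ℤ).restrict
    fun _ ↦ mulVec_mem_dualLat P
  map_one' := by
    ext x : 2
    simp
  map_mul' P Q := by
    ext x : 2
    change (P * Q).1.1.map Int.cast *ᵥ x.1 = P.1.1.map Int.cast *ᵥ Q.1.1.map Int.cast *ᵥ x.1
    rw [Matrix.mulVec_mulVec, ← Matrix.map_mul_intCast]
    rfl

lemma coe_dualHom_apply (P : isometryGroup G) (x : dualLat G) :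
    (dualHom P x : Fin n → ℚ) = P.1.1.map (Int.cast : ℤ → ℚ) *ᵥ x := rfl

/-- The action of `O(L)` on the discriminant group `A_L`. -/
def discHom : isometryGroup G →* Module.End ℤ (discGroup G) where
  toFun P := Submodule.mapQ _ _ (dualHom P) fun _ ↦ mulVec_mem_intLat P.1.1
  map_one' := by
    ext x
    simp
  map_mul' P Q := by
    ext x
    exact congrArg dmk (LinearMap.congr_fun (map_mul dualHom P Q) x)

/-- The natural map `O(L) → Aut(A_L)`. -/
def discAut (P : isometryGroup G) : discGroup G ≃+ discGroup G where
  toFun := discHom P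
  invFun := discHom P⁻¹
  left_inv c := by rw [← Module.End.mul_apply, ← map_mul, inv_mul_cancel, map_one]; rfl
  right_inv c := by rw [← Module.End.mul_apply, ← map_mul, mul_inv_cancel, map_one]; rfl
  map_add' := map_add (discHom P)

lemma discAut_dmk (P : isometryGroup G) (x : dualLat G) :
    discAut P (dmk x) = dmk (dualHom P x) := rfl

lemma discAut_one : discAut (1 : isometryGroup G) = AddEquiv.refl (discGroup G) := by
  ext c
  exact congrArg (fun f : Module.End ℤ (discGroup G) ↦ f c) (map_one discHom)

lemma qQ_mulVec (P : isometryGroup G) (x : Fin n → ℚ) :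
    qQ G (P.1.1.map (Int.cast : ℤ → ℚ) *ᵥ x) = qQ G x := by
  have hP : (P.1.1.map (Int.cast : ℤ → ℚ))ᵀ * G.map Int.cast * P.1.1.map Int.cast =
      G.map Int.cast := by
    rw [← Matrix.transpose_map, ← Matrix.map_mul_intCast, ← Matrix.map_mul_intCast,
      mem_isometryGroup_iff.mp P.2]
  rw [qQ, qQ, ← Matrix.vecMul_transpose, ← Matrix.dotProduct_mulVec, Matrix.vecMul_transpose,
    Matrix.mulVec_mulVec, Matrix.mulVec_mulVec, hP]

lemma preservesDiscForm_discAut (hG : IsEvenGram G) (P : isometryGroup G) :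
    PreservesDiscForm (discAut P) := by
  refine (preservesDiscForm_iff hG).mpr fun c ↦ ?_
  obtain ⟨x, rfl⟩ := dmk_surjective c
  rw [discAut_dmk, discForm_dmk, discForm_dmk, coe_dualHom_apply, qQ_mulVec]

end Isometries

section GlueClasses

lemma gramM_eq : gramM =
    !![0, 1,  0,  0,  0,  0,  0,  0,  0,  0,  0;
       1, 0,  0,  0,  0,  0,  0,  0,  0,  0,  0;
       0, 0, -2,  1,  0,  0,  0,  0,  0,  0,  0;
       0, 0,  1, -2,  1,  0,  0,  0,  0,  0,  0;
       0, 0,  0,  1, -2,  1,  0,  0,  0,  0,  0;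
       0, 0,  0,  0,  1, -2,  1,  0,  0,  0,  0;
       0, 0,  0,  0,  0,  1, -2,  1,  0,  0,  0;
       0, 0,  0,  0,  0,  0,  1, -2,  1,  1,  0;
       0, 0,  0,  0,  0,  0,  0,  1, -2,  0,  0;
       0, 0,  0,  0,  0,  0,  0,  1,  0, -2,  0;
       0, 0,  0,  0,  0,  0,  0,  0,  0,  0, -2] := by
  decide +kernel

lemma isEvenGram_gramM : IsEvenGram gramM := by
  rw [gramM_eq]
  exact ⟨by decide +kernel, by decide +kernel⟩

lemma gramM_mulVec (z : Fin 11 → ℤ) :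
    gramM *ᵥ z = ![z 1, z 0, -2 * z 2 + z 3, z 2 - 2 * z 3 + z 4, z 3 - 2 * z 4 + z 5,
      z 4 - 2 * z 5 + z 6, z 5 - 2 * z 6 + z 7, z 6 - 2 * z 7 + z 8 + z 9, z 7 - 2 * z 8,
      z 7 - 2 * z 9, -2 * z 10] := by
  rw [gramM_eq]
  ext i
  fin_cases i <;> simp [Matrix.mulVec, dotProduct, Fin.sum_univ_succ] <;> ring

/-- Twice the inverse of `gramM`. -/
def twiceInvGramM : Matrix (Fin 11) (Fin 11) ℤ :=
  dsum (dsum !![0, 2; 2, 0]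
    !![-2, -2, -2, -2,  -2,  -2, -1, -1;
       -2, -4, -4, -4,  -4,  -4, -2, -2;
       -2, -4, -6, -6,  -6,  -6, -3, -3;
       -2, -4, -6, -8,  -8,  -8, -4, -4;
       -2, -4, -6, -8, -10, -10, -5, -5;
       -2, -4, -6, -8, -10, -12, -6, -6;
       -1, -2, -3, -4,  -5,  -6, -4, -3;
       -1, -2, -3, -4,  -5,  -6, -3, -4]) !![-1]

lemma twiceInvGramM_mul_gramM : twiceInvGramM * gramM = (2 : ℤ) • 1 := by
  decide +kernel

/-- The numerators of the glue vector `i s₁ + j s₂ + k r`. Here `s₁, s₂ ∈ D₈*` represent the two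
half-spin classes by vectors with coordinates `0` and `1 / 2`, and `r ∈ A₁*` is half of the root
of `A₁`. -/
def glueVec (i j k : ℤ) : Fin 11 → ℤ := ![0, 0, i + j, 0, i + j, 0, i + j, 0, i, j, k]

lemma fracVec_glueVec_mem_dualLat (i j k : ℤ) : fracVec 2 (glueVec i j k) ∈ dualLat gramM := by
  rw [fracVec_mem_dualLat_iff two_ne_zero, gramM_mulVec]
  intro t
  fin_cases t <;> simp [glueVec] <;> omega

/-- The class of the glue vector `i s₁ + j s₂ + k r` in `A_M`; every element of `A_M` is of this
form, with `i`, `j`, `k` unique modulo `2`. -/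
def glueClass (i j k : ℤ) : discGroup gramM := dmk ⟨_, fracVec_glueVec_mem_dualLat i j k⟩

lemma dmk_eq_glueClass_iff {z : Fin 11 → ℤ} (hz : fracVec 2 z ∈ dualLat gramM) {i j k : ℤ} :
    dmk ⟨_, hz⟩ = glueClass i j k ↔ ∀ t, 2 ∣ (z - glueVec i j k) t := by
  rw [glueClass, dmk_eq_dmk_iff, ← map_sub, fracVec_mem_intLat_iff two_ne_zero]

lemma glueClass_eq_iff {i j k i' j' k' : ℤ} : glueClass i j k = glueClass i' j' k' ↔
    2 ∣ i - i' ∧ 2 ∣ j - j' ∧ 2 ∣ k - k' := by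
  rw [glueClass, dmk_eq_glueClass_iff]
  refine ⟨fun h ↦ ⟨h 8, h 9, h 10⟩, fun ⟨hi, hj, hk⟩ t ↦ ?_⟩
  fin_cases t <;> simp [glueVec] <;> omega

lemma two_dvd_sub_glueVec {z : Fin 11 → ℤ} (hz : ∀ t, 2 ∣ (gramM *ᵥ z) t) (t : Fin 11) :
    2 ∣ (z - glueVec (z 8) (z 9) (z 10)) t := by
  rw [gramM_mulVec] at hz
  have h₀ : 2 ∣ z 1 := hz 0
  have h₁ : 2 ∣ z 0 := hz 1
  have h₂ : 2 ∣ -2 * z 2 + z 3 := hz 2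
  have h₃ : 2 ∣ z 2 - 2 * z 3 + z 4 := hz 3
  have h₄ : 2 ∣ z 3 - 2 * z 4 + z 5 := hz 4
  have h₅ : 2 ∣ z 4 - 2 * z 5 + z 6 := hz 5
  have h₆ : 2 ∣ z 5 - 2 * z 6 + z 7 := hz 6
  have h₇ : 2 ∣ z 6 - 2 * z 7 + z 8 + z 9 := hz 7
  fin_cases t <;> simp [glueVec] <;> omega

lemma exists_eq_glueClass (c : discGroup gramM) : ∃ i j k : Fin 2, c = glueClass i j k := by
  obtain ⟨⟨x, hx⟩, rfl⟩ := dmk_surjective c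
  obtain ⟨z, rfl⟩ := exists_fracVec_eq_of_mul_eq_smul_one two_ne_zero twiceInvGramM_mul_gramM hx
  have hz : dmk ⟨_, hx⟩ = glueClass (z 8) (z 9) (z 10) :=
    (dmk_eq_glueClass_iff hx).mpr <|
      two_dvd_sub_glueVec ((fracVec_mem_dualLat_iff two_ne_zero).mp hx)
  refine ⟨⟨(z 8 % 2).toNat, by omega⟩, ⟨(z 9 % 2).toNat, by omega⟩,
    ⟨(z 10 % 2).toNat, by omega⟩, hz.trans (glueClass_eq_iff.mpr ?_)⟩
  simp only
  omega

lemma glueClass_eq_zsmul_add (i j k : ℤ) : glueClass i j k =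
    (i - k) • glueClass 1 0 0 + (j - k) • glueClass 0 1 0 + k • glueClass 1 1 1 := by
  have hvec : glueVec i j k =
      (i - k) • glueVec 1 0 0 + (j - k) • glueVec 0 1 0 + k • glueVec 1 1 1 := by
    ext t
    fin_cases t <;> simp [glueVec] <;> ring
  refine congrArg dmk (Subtype.ext ?_)
  simp only [hvec, map_add, map_zsmul]
  rfl

lemma glueVec_dotProduct_gramM_mulVec (i j k : ℤ) :
    glueVec i j k ⬝ᵥ gramM *ᵥ glueVec i j k =
      -2 * (4 * i ^ 2 + 6 * (i * j) + 4 * j ^ 2 + k ^ 2) := by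
  rw [gramM_mulVec]
  simp [glueVec, dotProduct, Fin.sum_univ_succ]
  ring

lemma discForm_glueClass (i j k : ℤ) : discForm isEvenGram_gramM (glueClass i j k) =
    ((i * j - k ^ 2 / 2 : ℚ) : AddCircle (2 : ℚ)) := by
  rw [glueClass, discForm_dmk, qQ_fracVec, glueVec_dotProduct_gramM_mulVec, coe_addCircle_eq_iff]
  refine ⟨-(i + j) ^ 2, ?_⟩
  push_cast
  ring

lemma discForm_glueClass_eq_iff {i j k i' j' k' : ℤ} :
    discForm isEvenGram_gramM (glueClass i j k) = discForm isEvenGram_gramM (glueClass i' j' k') ↔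
      2 * i * j - k ^ 2 ≡ 2 * i' * j' - k' ^ 2 [ZMOD 4] := by
  rw [discForm_glueClass, discForm_glueClass, coe_addCircle_eq_iff, Int.modEq_comm,
    Int.modEq_iff_dvd]
  refine exists_congr fun m ↦ ?_
  rw [← Int.cast_inj (α := ℚ)]
  push_cast
  constructor <;> intro h <;> linarith

lemma glueClass_zero : glueClass 0 0 0 = 0 := by
  simpa using glueClass_eq_zsmul_add 0 0 0

lemma eq_glueClass_one_one_one {c : discGroup gramM}
    (hc : discForm isEvenGram_gramM c = discForm isEvenGram_gramM (glueClass 1 1 1)) :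
    c = glueClass 1 1 1 := by
  obtain ⟨i, j, k, rfl⟩ := exists_eq_glueClass c
  rw [discForm_glueClass_eq_iff] at hc
  rw [glueClass_eq_iff]
  revert i j k
  decide

lemma ne_zero_and_discForm_eq_zero_iff {c : discGroup gramM} :
    c ≠ 0 ∧ discForm isEvenGram_gramM c = 0 ↔ c = glueClass 1 0 0 ∨ c = glueClass 0 1 0 := by
  obtain ⟨i, j, k, rfl⟩ := exists_eq_glueClass c
  rw [← discForm_zero isEvenGram_gramM, ← glueClass_zero, discForm_glueClass_eq_iff, ne_eq]
  simp only [glueClass_eq_iff]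
  revert i j k
  decide

lemma addEquiv_ext_glueClass {φ ψ : discGroup gramM ≃+ discGroup gramM}
    (h₁ : φ (glueClass 1 0 0) = ψ (glueClass 1 0 0))
    (h₂ : φ (glueClass 0 1 0) = ψ (glueClass 0 1 0))
    (h₃ : φ (glueClass 1 1 1) = ψ (glueClass 1 1 1)) : φ = ψ := by
  ext c
  obtain ⟨i, j, k, rfl⟩ := exists_eq_glueClass c
  rw [glueClass_eq_zsmul_add]
  simp only [map_add, map_zsmul, h₁, h₂, h₃]

end GlueClasses

section Classification

/-- The isometry of `M` induced by the automorphism of the Dynkin diagram of `D₈` that swaps the two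
end nodes of the fork. -/
def forkSwap : isometryGroup gramM :=
  ⟨GeneralLinearGroup.swap ℤ 8 9, by
    rw [mem_isometryGroup_iff, GeneralLinearGroup.val_swap, gramM_eq]
    decide +kernel⟩

lemma discAut_forkSwap_glueClass (i j k : ℤ) :
    discAut forkSwap (glueClass i j k) = glueClass j i k := by
  refine congrArg dmk (Subtype.ext ?_)
  have hvec : forkSwap.1.1 *ᵥ glueVec i j k = glueVec j i k := by
    rw [forkSwap, GeneralLinearGroup.val_swap, swap_mulVec, glueVec, glueVec, add_comm i j]
    ext t
    fin_cases t <;> rfl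
  rw [coe_dualHom_apply, mulVec_fracVec, hvec]

lemma glueClass_one_zero_zero_ne_glueClass_zero_one_zero : glueClass 1 0 0 ≠ glueClass 0 1 0 := by
  rw [ne_eq, glueClass_eq_iff]
  decide

lemma eq_refl_or_eq_discAut_forkSwap {φ : discGroup gramM ≃+ discGroup gramM}
    (hφ : PreservesDiscForm φ) : φ = AddEquiv.refl _ ∨ φ = discAut forkSwap := by
  rw [preservesDiscForm_iff isEvenGram_gramM] at hφ
  have h₁₁₁ : φ (glueClass 1 1 1) = glueClass 1 1 1 := eq_glueClass_one_one_one (hφ _)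
  have hperm {c : discGroup gramM} (hc : c = glueClass 1 0 0 ∨ c = glueClass 0 1 0) :
      φ c = glueClass 1 0 0 ∨ φ c = glueClass 0 1 0 := by
    rw [← ne_zero_and_discForm_eq_zero_iff] at hc ⊢
    rwa [hφ, map_ne_zero_iff φ φ.injective]
  have hne : φ (glueClass 1 0 0) ≠ φ (glueClass 0 1 0) :=
    φ.injective.ne glueClass_one_zero_zero_ne_glueClass_zero_one_zero
  rcases hperm (.inl rfl) with h₁ | h₁ <;> rcases hperm (.inr rfl) with h₂ | h₂
  · exact absurd (h₁.trans h₂.symm) hne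
  · exact .inl (addEquiv_ext_glueClass h₁ h₂ h₁₁₁)
  · right
    apply addEquiv_ext_glueClass <;> rw [discAut_forkSwap_glueClass] <;> assumption
  · exact absurd (h₁.trans h₂.symm) hne

lemma preservesDiscForm_iff_eq_refl_or_eq_discAut_forkSwap
    {φ : discGroup gramM ≃+ discGroup gramM} :
    PreservesDiscForm φ ↔ φ = AddEquiv.refl _ ∨ φ = discAut forkSwap := by
  refine ⟨eq_refl_or_eq_discAut_forkSwap, ?_⟩
  rintro (rfl | rfl)
  · exact discAut_one ▸ preservesDiscForm_discAut isEvenGram_gramM 1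
  · exact preservesDiscForm_discAut isEvenGram_gramM forkSwap

lemma refl_ne_discAut_forkSwap : AddEquiv.refl (discGroup gramM) ≠ discAut forkSwap := fun h ↦
  glueClass_one_zero_zero_ne_glueClass_zero_one_zero <|
    (DFunLike.congr_fun h (glueClass 1 0 0)).trans (discAut_forkSwap_glueClass 1 0 0)

lemma exists_discAut_eq {φ : discGroup gramM ≃+ discGroup gramM} (hφ : PreservesDiscForm φ) :
    ∃ P : isometryGroup gramM, discAut P = φ := by
  rcases eq_refl_or_eq_discAut_forkSwap hφ with rfl | rfl
  · exact ⟨1, discAut_one⟩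
  · exact ⟨forkSwap, rfl⟩

end Classification

/-- For `M = U ⊕ D8 ⊕ A1`, the group `O(q_M)` of automorphisms of the discriminant
group preserving the discriminant quadratic form has order 2, and the natural
homomorphism `O(M) → O(q_M)` is surjective. -/
theorem Oq_order_two_and_O_to_Oq_surjective_UD8A1 :
    Nat.card {φ : discGroup gramM ≃+ discGroup gramM // PreservesDiscForm φ} = 2 ∧
    (∀ φ : discGroup gramM ≃+ discGroup gramM, PreservesDiscForm φ →
      ∃ P : Matrix (Fin 11) (Fin 11) ℤ, IsUnit P.det ∧ Pᵀ * gramM * P = gramM ∧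
        ∀ x y : dualLat gramM,
          (y : Fin 11 → ℚ) = (P.map (Int.cast : ℤ → ℚ)).mulVec (x : Fin 11 → ℚ) →
            φ (dmk x) = dmk y) := by
  constructor
  · have hOq : {φ : discGroup gramM ≃+ discGroup gramM | PreservesDiscForm φ} =
        {AddEquiv.refl _, discAut forkSwap} :=
      Set.ext fun _ ↦ preservesDiscForm_iff_eq_refl_or_eq_discAut_forkSwap
    exact (congrArg Set.ncard hOq).trans (Set.ncard_pair refl_ne_discAut_forkSwap)
  · intro φ hφ
    obtain ⟨P, rfl⟩ := exists_discAut_eq hφ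
    refine ⟨P.1.1, (Matrix.isUnit_iff_isUnit_det _).mp P.1.isUnit,
      mem_isometryGroup_iff.mp P.2, fun x y hxy ↦ ?_⟩
    rw [discAut_dmk]
    exact congrArg dmk (Subtype.ext hxy.symm)
end

section
/- In the rank-12 lattice L = U ⊕ U(2) ⊕ E8(2) (which is U ⊕ 𝔼(2) where 𝔼 = E8 ⊕ U is the Enriques lattice), there exists a vector v with norm v·v = -4 such that the orthogonal complement v^⊥ = {x ∈ L : x·v = 0}, with the restricted form, is isometric to the rank-11 lattice U ⊕ ⟨4⟩ ⊕ E8(2). -/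
open Matrix

/-- `L = U ⊕ U(2) ⊕ E8(2) = U ⊕ 𝔼(2)` where `𝔼 = E8 ⊕ U` is the Enriques lattice. -/
def gramL : Matrix (Fin 12) (Fin 12) ℤ := dsum (dsum latU (2 • latU)) (2 • latE8)

/-- `U ⊕ ⟨4⟩ ⊕ E8(2)`. -/
def gramC : Matrix (Fin 11) (Fin 11) ℤ := dsum (dsum latU !![(4 : ℤ)]) (2 • latE8)

/-!
Let `e, f` be the standard basis of `U(m)`, where `m ≠ 0`. The vector `e - f` has norm `-2m`, and
its orthogonal complement in `U(m)` is spanned by `e + f`, of norm `2m`. Adding orthogonal summands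
`A` and `C` just enlarges the complement by `A` and `C`, so in `A ⊕ U(m) ⊕ C` it is
`A ⊕ ⟨2m⟩ ⊕ C`. Take `m = 2`, `A = U` and `C = E8(2)`.
-/

/-- `Fin.append` as a linear equivalence. It is built from `finSumFinEquiv` because `dsum` reindexes
a block matrix along it. -/
def appendLinearEquiv (R : Type*) [Semiring R] (a b : ℕ) :
    ((Fin a → R) × (Fin b → R)) ≃ₗ[R] (Fin (a + b) → R) :=
  (LinearEquiv.sumArrowLequivProdArrow (Fin a) (Fin b) R R).symm ≪≫ₗ
    LinearEquiv.funCongrLeft R R finSumFinEquiv.symm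

section Bform

variable {n a b : ℕ}

@[simp]
theorem bform_zero_left (G : Matrix (Fin n) (Fin n) ℤ) (y : Fin n → ℤ) : bform G 0 y = 0 :=
  zero_dotProduct _

@[simp]
theorem bform_zero_right (G : Matrix (Fin n) (Fin n) ℤ) (x : Fin n → ℤ) : bform G x 0 = 0 := by
  rw [bform, mulVec_zero, dotProduct_zero]

theorem bform_dsum_append (A : Matrix (Fin a) (Fin a) ℤ) (B : Matrix (Fin b) (Fin b) ℤ)
    (p q : (Fin a → ℤ) × (Fin b → ℤ)) :
    bform (dsum A B) (appendLinearEquiv ℤ a b p) (appendLinearEquiv ℤ a b q) =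
      bform A p.1 q.1 + bform B p.2 q.2 := by
  have append_eq (r : (Fin a → ℤ) × (Fin b → ℤ)) :
      appendLinearEquiv ℤ a b r = Sum.elim r.1 r.2 ∘ finSumFinEquiv.symm := rfl
  simp only [bform, dsum, append_eq, reindex_apply, submatrix_mulVec_equiv, Equiv.symm_symm,
    Function.comp_assoc, Equiv.symm_comp_self, Function.comp_id, comp_equiv_dotProduct_comp_equiv,
    fromBlocks_mulVec, Sum.elim_comp_inl, Sum.elim_comp_inr, zero_mulVec, add_zero, zero_add,
    sumElim_dotProduct_sumElim]

end Bform

/-- `H` is the Gram matrix of the orthogonal complement `v^⊥` in the lattice with Gram matrix `G`,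
with respect to some `ℤ`-basis of `v^⊥`. The basis is encoded by the injective linear map `φ` taking
coordinates to vectors. -/
def IsOrthogonalGram {n k : ℕ} (G : Matrix (Fin n) (Fin n) ℤ) (v : Fin n → ℤ)
    (H : Matrix (Fin k) (Fin k) ℤ) : Prop :=
  ∃ φ : (Fin k → ℤ) →ₗ[ℤ] (Fin n → ℤ), Function.Injective φ ∧
    (∀ x, x ∈ LinearMap.range φ ↔ bform G x v = 0) ∧
    ∀ s t, bform G (φ s) (φ t) = bform H s t

namespace IsOrthogonalGram

variable {a b k l : ℕ}

theorem exists_linearEquiv {G : Matrix (Fin a) (Fin a) ℤ} {v : Fin a → ℤ}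
    {H : Matrix (Fin k) (Fin k) ℤ} (h : IsOrthogonalGram G v H) :
    ∃ W : Submodule ℤ (Fin a → ℤ), (∀ x, x ∈ W ↔ bform G x v = 0) ∧
      ∃ e : W ≃ₗ[ℤ] (Fin k → ℤ), ∀ x y : W, bform H (e x) (e y) = bform G x y := by
  obtain ⟨φ, φ_inj, mem_range, bform_map⟩ := h
  let e := LinearEquiv.ofInjective φ φ_inj
  have map_symm (x : LinearMap.range φ) : φ (e.symm x) = x :=
    congrArg Subtype.val (e.apply_symm_apply x)
  refine ⟨LinearMap.range φ, mem_range, e.symm, fun x y => ?_⟩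
  rw [← bform_map, map_symm, map_symm]

protected theorem zero (G : Matrix (Fin a) (Fin a) ℤ) : IsOrthogonalGram G 0 G :=
  ⟨LinearMap.id, Function.injective_id, by simp, fun _ _ => rfl⟩

protected theorem dsum {u : Fin a → ℤ} {w : Fin b → ℤ} {A : Matrix (Fin a) (Fin a) ℤ}
    {B : Matrix (Fin b) (Fin b) ℤ} {H : Matrix (Fin k) (Fin k) ℤ} {K : Matrix (Fin l) (Fin l) ℤ}
    (hA : IsOrthogonalGram A u H) (hB : IsOrthogonalGram B w K) (huw : u = 0 ∨ w = 0) :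
    IsOrthogonalGram (dsum A B) (appendLinearEquiv ℤ a b (u, w)) (dsum H K) := by
  obtain ⟨φ, φ_inj, mem_range_φ, bform_φ⟩ := hA
  obtain ⟨ψ, ψ_inj, mem_range_ψ, bform_ψ⟩ := hB
  let E := appendLinearEquiv ℤ a b
  let F := appendLinearEquiv ℤ k l
  refine ⟨E.toLinearMap ∘ₗ φ.prodMap ψ ∘ₗ F.symm.toLinearMap, ?_, fun x => ?_, fun s t => ?_⟩
  · exact E.injective.comp ((φ_inj.prodMap ψ_inj).comp F.symm.injective)
  · obtain ⟨⟨y, z⟩, rfl⟩ := E.surjective x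
    have add_eq_zero_iff : bform A y u + bform B z w = 0 ↔ bform A y u = 0 ∧ bform B z w = 0 := by
      rcases huw with rfl | rfl <;> simp
    rw [bform_dsum_append, add_eq_zero_iff, ← mem_range_φ, ← mem_range_ψ]
    simp [E, F.surjective.exists]
  · obtain ⟨p, rfl⟩ := F.surjective s
    obtain ⟨q, rfl⟩ := F.surjective t
    simp [E, F, bform_dsum_append, bform_φ, bform_ψ]

end IsOrthogonalGram

theorem bform_smul_latU (m : ℤ) (x y : Fin 2 → ℤ) :
    bform (m • latU) x y = m * (x 0 * y 1 + x 1 * y 0) := by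
  simp only [bform, smul_mulVec, dotProduct_smul, smul_eq_mul]
  simp [dotProduct, mulVec]

theorem bform_of_one (d : ℤ) (x y : Fin 1 → ℤ) : bform !![d] x y = d * (x 0 * y 0) := by
  simp [bform, dotProduct, mulVec, mul_left_comm]

theorem isOrthogonalGram_smul_latU {m : ℤ} (hm : m ≠ 0) :
    IsOrthogonalGram (m • latU) ![1, -1] !![2 * m] := by
  refine ⟨LinearMap.pi fun _ => LinearMap.proj 0, fun s t hst => ?_, fun x => ?_, fun s t => ?_⟩
  · exact funext fun i => by simpa [Subsingleton.elim i 0] using congrFun hst 0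
  · have orthogonal_iff : bform (m • latU) x ![1, -1] = 0 ↔ x 0 = x 1 := by
      rw [bform_smul_latU, mul_eq_zero_iff_left hm]
      simp only [cons_val_zero, cons_val_one]
      lia
    rw [orthogonal_iff]
    constructor
    · rintro ⟨s, rfl⟩
      rfl
    · intro hx
      exact ⟨fun _ => x 0, by ext i; fin_cases i <;> simp [hx]⟩
  · rw [bform_smul_latU, bform_of_one]
    simp only [LinearMap.pi_apply, LinearMap.proj_apply]
    ring

theorem exists_norm_neg_four_orthogonal_complement_general {a c : ℕ}
    (A : Matrix (Fin a) (Fin a) ℤ) (C : Matrix (Fin c) (Fin c) ℤ) {m : ℤ} (hm : m ≠ 0) :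
    ∃ v : Fin (a + 2 + c) → ℤ, bform (dsum (dsum A (m • latU)) C) v v = -(2 * m) ∧
      ∃ W : Submodule ℤ (Fin (a + 2 + c) → ℤ),
        (∀ x, x ∈ W ↔ bform (dsum (dsum A (m • latU)) C) x v = 0) ∧
        ∃ e : W ≃ₗ[ℤ] (Fin (a + 1 + c) → ℤ),
          ∀ x y : W, bform (dsum (dsum A !![2 * m]) C) (e x) (e y) =
            bform (dsum (dsum A (m • latU)) C) x y := by
  have dsum_latU := (IsOrthogonalGram.zero A).dsum (isOrthogonalGram_smul_latU hm) (.inl rfl)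
  have complement := dsum_latU.dsum (IsOrthogonalGram.zero C) (.inr rfl)
  refine ⟨_, ?_, complement.exists_linearEquiv⟩
  simp only [bform_dsum_append, bform_smul_latU, bform_zero_right, cons_val_zero, cons_val_one]
  ring

/-- In `L = U ⊕ U(2) ⊕ E8(2)` there is a vector `v` of norm `-4` whose orthogonal
complement `v^⊥`, with the restricted form, is isometric to `U ⊕ ⟨4⟩ ⊕ E8(2)`. -/
theorem exists_norm_neg_four_orthogonal_complement :
    ∃ v : Fin 12 → ℤ, bform gramL v v = -4 ∧
      ∃ W : Submodule ℤ (Fin 12 → ℤ), (∀ x, x ∈ W ↔ bform gramL x v = 0) ∧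
        ∃ e : W ≃ₗ[ℤ] (Fin 11 → ℤ),
          ∀ x y : W, bform gramC (e x) (e y) = bform gramL x y :=
  exists_norm_neg_four_orthogonal_complement_general latU (2 • latE8) two_ne_zero
end
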